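/- Let θ : S(V) → V' be a linear map from the symmetric algebra on V (over a field of characteristic zero) to a vector space V'. Then there is a unique coalgebra morphism θ' : S(V) → S(V') whose composition with the projection S(V') → V' onto the degree-1 part equals θ minus its counit part; explicitly θ'(μ) = Σ_{n≥0} (1/n!) θ(μ_{(1)})···θ(μ_{(n)}) in Sweedler notation. -/

import Mathlib

open TensorProduct

noncomputable section

/-- The commutativity relation on the tensor algebra. -/
inductive SymmRel (k V : Type*) [Field k] [AddCommGroup V] [Module k V] :
    TensorAlgebra k V → TensorAlgebra k V → Prop
  | comm (a b : TensorAlgebra k V) : SymmRel k V (a * b) (b * a)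

/-- The symmetric algebra `S(V)` on a vector space `V`. -/
def SymmAlg (k V : Type*) [Field k] [AddCommGroup V] [Module k V] : Type _ :=
  RingQuot (SymmRel k V)

variable (k V : Type*) [Field k] [AddCommGroup V] [Module k V]

instance : Ring (SymmAlg k V) := inferInstanceAs (Ring (RingQuot (SymmRel k V)))

instance : Algebra k (SymmAlg k V) :=
  inferInstanceAs (Algebra k (RingQuot (SymmRel k V)))

theorem SymmAlg.mul_comm' (a b : RingQuot (SymmRel k V)) : a * b = b * a := by
  obtain ⟨x, rfl⟩ := RingQuot.mkAlgHom_surjective k (SymmRel k V) a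
  obtain ⟨y, rfl⟩ := RingQuot.mkAlgHom_surjective k (SymmRel k V) b
  rw [← map_mul, ← map_mul, RingQuot.mkAlgHom_rel k (SymmRel.comm x y)]

instance : CommRing (SymmAlg k V) :=
  { (inferInstance : Ring (SymmAlg k V)) with
    mul_comm := SymmAlg.mul_comm' k V }

/-- The canonical inclusion `V → S(V)`. -/
def SymmAlg.ι : V →ₗ[k] SymmAlg k V :=
  (RingQuot.mkAlgHom k (SymmRel k V)).toLinearMap ∘ₗ TensorAlgebra.ι k

/-- Lifting a linear map `V → A` (`A` commutative) to an algebra map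
`S(V) → A`: the universal property of the symmetric algebra. -/
def SymmAlg.lift {A : Type*} [CommRing A] [Algebra k A] (φ : V →ₗ[k] A) :
    SymmAlg k V →ₐ[k] A :=
  RingQuot.liftAlgHom k
    ⟨TensorAlgebra.lift k φ, by
      intro x y h
      cases h with
      | comm a b => rw [map_mul, map_mul, mul_comm]⟩

/-- The comultiplication of `S(V)`, the algebra map sending `v` to
`v ⊗ 1 + 1 ⊗ v` (so elements of `V` are primitive). -/
def SymmAlg.comul : SymmAlg k V →ₐ[k] SymmAlg k V ⊗[k] SymmAlg k V :=
  SymmAlg.lift k V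
    (((TensorProduct.mk k (SymmAlg k V) (SymmAlg k V)).flip 1
        + TensorProduct.mk k (SymmAlg k V) (SymmAlg k V) 1) ∘ₗ SymmAlg.ι k V)

/-- The counit of `S(V)`, killing the positive-degree part. -/
def SymmAlg.counit : SymmAlg k V →ₐ[k] k := SymmAlg.lift k V 0


namespace SymmAlg

open WithConv Filter

section basics

variable {k V : Type*} [Field k] [AddCommGroup V] [Module k V]

theorem lift_ι {A : Type*} [CommRing A] [Algebra k A] (φ : V →ₗ[k] A) (v : V) :
    SymmAlg.lift k V φ (SymmAlg.ι k V v) = φ v := by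
  unfold SymmAlg.lift SymmAlg.ι
  erw [RingQuot.liftAlgHom_mkAlgHom_apply]
  simp

theorem hom_ext' {A : Type*} [Ring A] [Algebra k A] {f g : SymmAlg k V →ₐ[k] A}
    (h : ∀ v, f (SymmAlg.ι k V v) = g (SymmAlg.ι k V v)) : f = g := by
  apply RingQuot.ringQuot_ext'
  apply TensorAlgebra.hom_ext
  ext v
  exact h v

theorem comul_ι' (v : V) : SymmAlg.comul k V (SymmAlg.ι k V v) =
    SymmAlg.ι k V v ⊗ₜ[k] 1 + 1 ⊗ₜ[k] SymmAlg.ι k V v := by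
  unfold SymmAlg.comul
  rw [lift_ι]; rfl

theorem counit_ι' (v : V) : SymmAlg.counit k V (SymmAlg.ι k V v) = 0 := by
  unfold SymmAlg.counit
  rw [lift_ι]; rfl

theorem adjoin_ι : Algebra.adjoin k (Set.range (SymmAlg.ι k V)) = ⊤ := by
  set S := Algebra.adjoin k (Set.range (SymmAlg.ι k V)) with hS
  let φ : V →ₗ[k] S := (SymmAlg.ι k V).codRestrict S.toSubmodule
    (fun v => Algebra.subset_adjoin ⟨v, rfl⟩)
  have h : S.val.comp (SymmAlg.lift k V φ) = AlgHom.id k _ := by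
    apply hom_ext'
    intro v
    rw [AlgHom.comp_apply, lift_ι]; rfl
  rw [eq_top_iff]
  intro x _
  have := DFunLike.congr_fun h x
  simp only [AlgHom.comp_apply, AlgHom.id_apply] at this
  rw [← this]
  exact (SymmAlg.lift k V φ x).2

theorem ind {P : SymmAlg k V → Prop} (h1 : P 1)
    (hm : ∀ v x, P x → P (SymmAlg.ι k V v * x))
    (ha : ∀ x y, P x → P y → P (x + y)) (hs : ∀ (c : k) x, P x → P (c • x)) (x) : P x := by
  have hx : x ∈ Subalgebra.toSubmodule (Algebra.adjoin k (Set.range (SymmAlg.ι k V))) := by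
    rw [adjoin_ι]; trivial
  rw [Algebra.adjoin_eq_span] at hx
  induction hx using Submodule.span_induction with
  | mem x hx =>
    induction hx using Submonoid.closure_induction_left with
    | one => exact h1
    | mul_left x hx y _ ih =>
      obtain ⟨v, rfl⟩ := hx
      exact hm v y ih
  | zero => simpa using hs 0 1 h1
  | add x y _ _ hx hy => exact ha x y hx hy
  | smul c x _ hx => exact hs c x hx

instance instCoalg : Coalgebra k (SymmAlg k V) :=
  (Bialgebra.ofAlgHom (SymmAlg.comul k V) (SymmAlg.counit k V)
    (by
      apply hom_ext'
      intro v
      simp [comul_ι', Algebra.TensorProduct.one_def, TensorProduct.add_tmul, TensorProduct.tmul_add]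
      abel)
    (by
      apply hom_ext'
      intro v
      simp [comul_ι', counit_ι'])
    (by
      apply hom_ext'
      intro v
      simp [comul_ι', counit_ι'])).toCoalgebra

theorem coalg_comul : (Coalgebra.comul : SymmAlg k V →ₗ[k] _) = (SymmAlg.comul k V).toLinearMap :=
  rfl

theorem coalg_counit :
    (Coalgebra.counit : SymmAlg k V →ₗ[k] k) = (SymmAlg.counit k V).toLinearMap :=
  rfl

instance instCocomm : Coalgebra.IsCocomm k (SymmAlg k V) where
  comm_comp_comul := by
    have h : (Algebra.TensorProduct.comm k (SymmAlg k V)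
          (SymmAlg k V)).toAlgHom.comp (SymmAlg.comul k V) = SymmAlg.comul k V := by
      apply hom_ext'
      intro v
      simp [comul_ι']
      abel
    exact congrArg AlgHom.toLinearMap h

end basics

section conv

variable {k V A : Type*} [Field k] [AddCommGroup V] [Module k V] [CommRing A] [Algebra k A]

/-- Derivative in direction `v` on the convolution algebra. -/
def D (v : V) (f : WithConv (SymmAlg k V →ₗ[k] A)) : WithConv (SymmAlg k V →ₗ[k] A) :=
  toConv (f.ofConv ∘ₗ LinearMap.mulLeft k (SymmAlg.ι k V v))

theorem D_apply (v : V) (f : WithConv (SymmAlg k V →ₗ[k] A)) (x) :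
    D v f x = f (SymmAlg.ι k V v * x) := rfl

theorem D_add (v : V) (f g : WithConv (SymmAlg k V →ₗ[k] A)) : D v (f + g) = D v f + D v g := rfl

theorem D_smul (v : V) (c : k) (f : WithConv (SymmAlg k V →ₗ[k] A)) : D v (c • f) = c • D v f := rfl

theorem D_sub (v : V) (f g : WithConv (SymmAlg k V →ₗ[k] A)) : D v (f - g) = D v f - D v g := rfl

theorem D_mul (v : V) (f g : WithConv (SymmAlg k V →ₗ[k] A)) :
    D v (f * g) = D v f * g + f * D v g := by
  ext x
  change LinearMap.mul' k A (TensorProduct.map f.ofConv g.ofConv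
      (SymmAlg.comul k V (SymmAlg.ι k V v * x))) =
    LinearMap.mul' k A (TensorProduct.map (D v f).ofConv g.ofConv (SymmAlg.comul k V x)) +
    LinearMap.mul' k A (TensorProduct.map f.ofConv (D v g).ofConv (SymmAlg.comul k V x))
  rw [map_mul, comul_ι']
  generalize SymmAlg.comul k V x = t
  induction t with
  | zero => simp
  | add a b ha hb => simp only [mul_add, map_add, ha, hb]; abel
  | tmul a b => simp [add_mul, D]

theorem D_one (v : V) : D v (1 : WithConv (SymmAlg k V →ₗ[k] A)) = 0 := by
  ext x
  change algebraMap k A (SymmAlg.counit k V (SymmAlg.ι k V v * x)) = 0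
  rw [map_mul, counit_ι']; simp

theorem D_pow (v : V) (a : WithConv (SymmAlg k V →ₗ[k] A)) (n : ℕ) :
    D v (a ^ (n + 1)) = ((n : k) + 1) • (D v a * a ^ n) := by
  induction n with
  | zero => simp
  | succ n ih =>
    rw [pow_succ, D_mul, ih]
    push_cast
    rw [add_smul ((n : k) + 1), one_smul, smul_mul_assoc, mul_assoc, ← pow_succ, mul_comm (a ^ (n+1)) (D v a)]

theorem mul_one_apply (f g : WithConv (SymmAlg k V →ₗ[k] A)) : (f * g) 1 = f 1 * g 1 := by
  change LinearMap.mul' k A (TensorProduct.map f.ofConv g.ofConv (SymmAlg.comul k V 1)) = _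
  rw [map_one, Algebra.TensorProduct.one_def]; simp

theorem one_one_apply : (1 : WithConv (SymmAlg k V →ₗ[k] A)) 1 = 1 := by
  change algebraMap k A (SymmAlg.counit k V 1) = 1
  simp

theorem conv_ext {f g : WithConv (SymmAlg k V →ₗ[k] A)} (h : ∀ x, f x = g x) : f = g := by
  ext x; exact h x

theorem ode_zero {w : V → WithConv (SymmAlg k V →ₗ[k] A)} {d : WithConv (SymmAlg k V →ₗ[k] A)}
    (h1 : d 1 = 0) (h : ∀ v, D v d = w v * d) : d = 0 := by
  have key : ∀ x, ∀ b : WithConv (SymmAlg k V →ₗ[k] A), (b * d) x = 0 := by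
    intro x
    induction x using ind with
    | h1 => intro b; rw [mul_one_apply, h1, mul_zero]
    | hm v x ih =>
      intro b
      rw [← D_apply, D_mul, h v, ← mul_assoc, ← add_mul]
      exact ih _
    | ha x y hx hy => intro b; rw [map_add, hx, hy, add_zero]
    | hs c x hx => intro b; rw [map_smul, hx, smul_zero]
  apply conv_ext
  intro x
  have := key x 1
  rwa [one_mul] at this

theorem ode_unique {w : V → WithConv (SymmAlg k V →ₗ[k] A)}
    {f g : WithConv (SymmAlg k V →ₗ[k] A)}
    (h1 : f 1 = g 1) (hf : ∀ v, D v f = w v * f) (hg : ∀ v, D v g = w v * g) : f = g := by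
  rw [← sub_eq_zero]
  refine ode_zero (w := w) ?_ ?_
  · change f 1 - g 1 = 0
    rw [h1, sub_self]
  · intro v
    rw [D_sub, hf, hg, mul_sub]

theorem eventually_pow_zero (a : WithConv (SymmAlg k V →ₗ[k] A)) (ha : a 1 = 0) (x) :
    ∃ N, ∀ n ≥ N, ∀ b : WithConv (SymmAlg k V →ₗ[k] A), (a ^ n * b) x = 0 := by
  induction x using ind with
  | h1 =>
    refine ⟨1, fun n hn b => ?_⟩
    obtain ⟨m, rfl⟩ := Nat.exists_eq_add_of_le' hn
    rw [pow_succ, mul_assoc, mul_comm, mul_one_apply, mul_one_apply, ha, zero_mul, zero_mul]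
  | hm v x ih =>
    obtain ⟨N, hN⟩ := ih
    refine ⟨N + 1, fun n hn b => ?_⟩
    obtain ⟨m, rfl⟩ := Nat.exists_eq_add_of_le' (le_trans (Nat.le_add_left 1 N) hn)
    have e : D v (a ^ (m + 1) * b) = a ^ m * (((m : k) + 1) • (D v a * b) + a * D v b) := by
      rw [D_mul, D_pow, mul_add, smul_mul_assoc, mul_smul_comm, pow_succ]
      rw [mul_assoc (a ^ m) a, mul_comm (D v a) (a ^ m), mul_assoc (a ^ m)]
    rw [← D_apply, e]
    exact hN m (by omega) _
  | ha x y hx hy =>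
    obtain ⟨N, hN⟩ := hx
    obtain ⟨M, hM⟩ := hy
    refine ⟨max N M, fun n hn b => ?_⟩
    rw [map_add, hN n (le_trans (le_max_left _ _) hn), hM n (le_trans (le_max_right _ _) hn),
      add_zero]
  | hs c x hx =>
    obtain ⟨N, hN⟩ := hx
    refine ⟨N, fun n hn b => ?_⟩
    rw [map_smul, hN n hn, smul_zero]

/-- Truncated exponential. -/
def E (N : ℕ) (a : WithConv (SymmAlg k V →ₗ[k] A)) : WithConv (SymmAlg k V →ₗ[k] A) :=
  ∑ n ∈ Finset.range N, ((n.factorial : k))⁻¹ • a ^ n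

theorem E_succ (N : ℕ) (a : WithConv (SymmAlg k V →ₗ[k] A)) :
    E (N + 1) a = E N a + ((N.factorial : k))⁻¹ • a ^ N := Finset.sum_range_succ _ _

theorem D_E [CharZero k] (v : V) (N : ℕ) (a : WithConv (SymmAlg k V →ₗ[k] A)) :
    D v (E (N + 1) a) = D v a * E N a := by
  induction N with
  | zero => simp [E, D_one]
  | succ N ih =>
    rw [E_succ, D_add, ih, D_smul, D_pow, E_succ N, mul_add, mul_smul_comm, smul_smul]
    congr 2
    rw [Nat.factorial_succ]
    have h1 : (N : k) + 1 ≠ 0 := by exact_mod_cast Nat.succ_ne_zero N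
    have h2 : (N.factorial : k) ≠ 0 := by exact_mod_cast Nat.factorial_ne_zero N
    push_cast
    field_simp

theorem exists_exp (a : WithConv (SymmAlg k V →ₗ[k] A)) (ha : a 1 = 0) :
    ∃ e : WithConv (SymmAlg k V →ₗ[k] A), ∀ x, ∀ᶠ N in atTop, E N a x = e x := by
  have h : ∀ x, ∃ y, ∀ᶠ N in atTop, E N a x = y := by
    intro x
    obtain ⟨N, hN⟩ := eventually_pow_zero a ha x
    refine ⟨E N a x, ?_⟩
    filter_upwards [eventually_ge_atTop N] with M hM
    induction M, hM using Nat.le_induction with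
    | base => rfl
    | succ M hM ih =>
      rw [E_succ]
      change E M a x + ((M.factorial : k))⁻¹ • (a ^ M) x = _
      have := hN M hM 1
      rw [mul_one] at this
      rw [ih, this, smul_zero, add_zero]
  choose g hg using h
  refine ⟨toConv { toFun := g, map_add' := ?_, map_smul' := ?_ }, hg⟩
  · intro x y
    obtain ⟨N, h1, h2, h3⟩ := ((hg x).and ((hg y).and (hg (x + y)))).exists
    rw [← h1, ← h2, ← h3, map_add]
  · intro c x
    obtain ⟨N, h1, h2⟩ := ((hg x).and (hg (c • x))).exists
    rw [← h1, ← h2, map_smul, RingHom.id_apply]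

theorem exp_ode [CharZero k] {a e : WithConv (SymmAlg k V →ₗ[k] A)}
    (he : ∀ x, ∀ᶠ N in atTop, E N a x = e x) (v : V) : D v e = D v a * e := by
  apply conv_ext
  intro x
  have h1 : ∀ᶠ N in atTop, E (N + 1) a (SymmAlg.ι k V v * x) = e (SymmAlg.ι k V v * x) :=
    (tendsto_add_atTop_nat 1).eventually (he _)
  have h2 : ∀ t : SymmAlg k V ⊗[k] SymmAlg k V, ∀ᶠ N in atTop,
      LinearMap.mul' k A (TensorProduct.map (D v a).ofConv (E N a).ofConv t) =
      LinearMap.mul' k A (TensorProduct.map (D v a).ofConv e.ofConv t) := by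
    intro t
    induction t with
    | zero => simp
    | add s t hs ht =>
      filter_upwards [hs, ht] with N h1 h2
      simp only [map_add, h1, h2]
    | tmul y z =>
      filter_upwards [he z] with N h
      simp [h]
  obtain ⟨N, h1, h2⟩ := (h1.and (h2 (SymmAlg.comul k V x))).exists
  rw [D_apply, ← h1, ← D_apply, D_E]
  exact h2

theorem exp_one {a e : WithConv (SymmAlg k V →ₗ[k] A)} (ha : a 1 = 0)
    (he : ∀ x, ∀ᶠ N in atTop, E N a x = e x) : e 1 = 1 := by
  have h : ∀ N, E (N + 1) a 1 = 1 := by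
    intro N
    induction N with
    | zero => simp [E]; exact one_one_apply
    | succ N ih =>
      rw [E_succ]
      change E (N + 1) a 1 + (((N + 1).factorial : k))⁻¹ • (a ^ (N + 1)) 1 = 1
      rw [ih, pow_succ, mul_one_apply, ha, mul_zero, smul_zero, add_zero]
  obtain ⟨N, h1⟩ := ((tendsto_add_atTop_nat 1).eventually (he 1)).exists
  rw [← h1, h]

/-- Post-composition with an algebra map. -/
def push {B : Type*} [CommRing B] [Algebra k B] (h : A →ₐ[k] B)
    (f : WithConv (SymmAlg k V →ₗ[k] A)) : WithConv (SymmAlg k V →ₗ[k] B) :=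
  toConv (h.toLinearMap ∘ₗ f.ofConv)

theorem push_mul {B : Type*} [CommRing B] [Algebra k B] (h : A →ₐ[k] B)
    (f g : WithConv (SymmAlg k V →ₗ[k] A)) : push h (f * g) = push h f * push h g :=
  congrArg toConv (LinearMap.algHom_comp_convMul_distrib h f g)

theorem D_push {B : Type*} [CommRing B] [Algebra k B] (h : A →ₐ[k] B) (v : V)
    (f : WithConv (SymmAlg k V →ₗ[k] A)) : D v (push h f) = push h (D v f) := rfl

end conv

section main

variable {k V V' : Type*} [Field k] [CharZero k]
    [AddCommGroup V] [Module k V] [AddCommGroup V'] [Module k V']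

theorem conv_include (e : WithConv (SymmAlg k V →ₗ[k] SymmAlg k V')) :
    push (Algebra.TensorProduct.includeLeft (R := k) (S := k)
        (A := SymmAlg k V') (B := SymmAlg k V')) e *
      push (Algebra.TensorProduct.includeRight (R := k)
        (A := SymmAlg k V') (B := SymmAlg k V')) e =
    toConv (TensorProduct.map e.ofConv e.ofConv ∘ₗ (SymmAlg.comul k V).toLinearMap) := by
  apply conv_ext
  intro x
  change LinearMap.mul' k _ (TensorProduct.map (push _ e).ofConv (push _ e).ofConv
    (SymmAlg.comul k V x)) = TensorProduct.map e.ofConv e.ofConv (SymmAlg.comul k V x)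
  generalize SymmAlg.comul k V x = t
  induction t with
  | zero => simp
  | add s t hs ht => simp only [map_add, hs, ht]
  | tmul y z => simp [push]

theorem exp_comul {b : SymmAlg k V →ₗ[k] V'} {e : WithConv (SymmAlg k V →ₗ[k] SymmAlg k V')}
    (h1 : e 1 = 1)
    (he : ∀ v, D v e = D v (toConv (SymmAlg.ι k V' ∘ₗ b)) * e) :
    (SymmAlg.comul k V').toLinearMap ∘ₗ e.ofConv
          = TensorProduct.map e.ofConv e.ofConv ∘ₗ (SymmAlg.comul k V).toLinearMap := by
  apply toConv_injective
  rw [← conv_include]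
  change push (SymmAlg.comul k V') e = _
  set iL := Algebra.TensorProduct.includeLeft (R := k) (S := k)
        (A := SymmAlg k V') (B := SymmAlg k V')
  set iR := Algebra.TensorProduct.includeRight (R := k)
        (A := SymmAlg k V') (B := SymmAlg k V')
  set a := toConv (SymmAlg.ι k V' ∘ₗ b) with ha
  have hc : ∀ v, push (SymmAlg.comul k V') (D v a) = push iL (D v a) + push iR (D v a) := by
    intro v
    apply conv_ext
    intro x
    exact comul_ι' (b (SymmAlg.ι k V v * x))
  refine ode_unique (w := fun v => push (SymmAlg.comul k V') (D v a)) ?_ ?_ ?_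
  · rw [mul_one_apply]
    change SymmAlg.comul k V' (e 1) = iL (e 1) * iR (e 1)
    rw [h1]; simp
  · intro v
    rw [D_push, he, push_mul]
  · intro v
    rw [hc, D_mul, D_push, D_push, he, push_mul, push_mul]
    ring

theorem exp_counit {b : SymmAlg k V →ₗ[k] V'} {e : WithConv (SymmAlg k V →ₗ[k] SymmAlg k V')}
    (h1 : e 1 = 1)
    (he : ∀ v, D v e = D v (toConv (SymmAlg.ι k V' ∘ₗ b)) * e) :
    (SymmAlg.counit k V').toLinearMap ∘ₗ e.ofConv = (SymmAlg.counit k V).toLinearMap := by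
  have : push (SymmAlg.counit k V') e = 1 := by
    refine ode_unique (w := fun v => 0) ?_ ?_ ?_
    · rw [one_one_apply]
      change SymmAlg.counit k V' (e 1) = 1
      rw [h1, map_one]
    · intro v
      rw [D_push, he, push_mul]
      have : push (SymmAlg.counit k V') (D v (toConv (SymmAlg.ι k V' ∘ₗ b))) = 0 := by
        apply conv_ext
        intro x
        exact counit_ι' (b (SymmAlg.ι k V v * x))
      rw [this]
    · intro v
      rw [D_one, zero_mul]
  exact congrArg ofConv this

theorem proj_mul (p' : SymmAlg k V' →ₗ[k] V')
    (hpmul : ∀ a b : SymmAlg k V',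
      p' (a * b) = SymmAlg.counit k V' a • p' b + SymmAlg.counit k V' b • p' a)
    (f g : WithConv (SymmAlg k V →ₗ[k] SymmAlg k V'))
    (hf : ∀ x, SymmAlg.counit k V' (f x) = 0)
    (hg : ∀ x, SymmAlg.counit k V' (g x) = SymmAlg.counit k V x) (x) :
    p' ((f * g) x) = p' (f x) := by
  have h : ∀ t : SymmAlg k V ⊗[k] SymmAlg k V,
      p' (LinearMap.mul' k _ (TensorProduct.map f.ofConv g.ofConv t)) =
      p' (f (TensorProduct.rid k _ ((Coalgebra.counit (R := k) (A := SymmAlg k V)).lTensor _ t))) := by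
    intro t
    induction t with
    | zero => simp
    | add s t hs ht => simp only [map_add, hs, ht]
    | tmul y z => simp [hpmul, hf, hg, coalg_counit]
  have h2 := h (Coalgebra.comul x)
  rw [Coalgebra.lTensor_counit_comul] at h2
  simpa using h2

theorem id_ode (p' : SymmAlg k V' →ₗ[k] V')
    (hpι : ∀ v : V', p' (SymmAlg.ι k V' v) = v)
    (hpmul : ∀ a b : SymmAlg k V',
      p' (a * b) = SymmAlg.counit k V' a • p' b + SymmAlg.counit k V' b • p' a) (v : V') :
    D v (toConv (LinearMap.id : SymmAlg k V' →ₗ[k] SymmAlg k V')) =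
      D v (toConv (SymmAlg.ι k V' ∘ₗ p')) * toConv LinearMap.id := by
  apply conv_ext
  intro x
  have h : ∀ t : SymmAlg k V' ⊗[k] SymmAlg k V',
      LinearMap.mul' k _ (TensorProduct.map (D v (toConv (SymmAlg.ι k V' ∘ₗ p'))).ofConv
        LinearMap.id t) = SymmAlg.ι k V' v *
        (TensorProduct.lid k _ ((Coalgebra.counit (R := k) (A := SymmAlg k V')).rTensor _ t)) := by
    intro t
    induction t with
    | zero => simp
    | add s t hs ht => simp only [map_add, hs, ht, mul_add]
    | tmul y z => simp [D, hpmul, hpι, counit_ι', coalg_counit]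
  have h2 := h (Coalgebra.comul x)
  rw [Coalgebra.rTensor_counit_comul] at h2
  rw [LinearMap.convMul_apply]
  refine Eq.trans ?_ h2.symm
  simp [D]

theorem E_comp (a : WithConv (SymmAlg k V' →ₗ[k] SymmAlg k V'))
    (f : SymmAlg k V →ₗ[k] SymmAlg k V')
    (hf : (SymmAlg.comul k V').toLinearMap ∘ₗ f
          = TensorProduct.map f f ∘ₗ (SymmAlg.comul k V).toLinearMap)
    (hc : (SymmAlg.counit k V').toLinearMap ∘ₗ f = (SymmAlg.counit k V).toLinearMap) (N : ℕ) (x) :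
    E N a (f x) = E N (toConv (a.ofConv ∘ₗ f)) x := by
  have hp : ∀ n, toConv ((a ^ n).ofConv ∘ₗ f) = toConv (a.ofConv ∘ₗ f) ^ n := by
    intro n
    induction n with
    | zero =>
      rw [pow_zero, pow_zero]
      apply conv_ext
      intro x
      exact congrArg (algebraMap k _) (DFunLike.congr_fun hc x)
    | succ n ih =>
      rw [pow_succ, pow_succ, ← ih]
      let F : SymmAlg k V →ₗc[k] SymmAlg k V' :=
        { f with counit_comp := hc, map_comp_comul := hf.symm }
      exact congrArg toConv (LinearMap.convMul_comp_coalgHom_distrib (a ^ n) a F)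
  induction N with
  | zero => rfl
  | succ N ih =>
    rw [E_succ, E_succ, ← hp]
    exact congrArg (· + _) ih

end main

end SymmAlg

/-- (cofreeness-type universal property used in formal group
theory) Let `θ : S(V) → V'` be a linear map, char `k` = 0.  Given the
projection `p' : S(V') → V'` onto the degree-1 part (characterized by
`p' 1 = 0`, `p' ∘ ι = id`, and `p'(a·b) = ε(a)•p'(b) + ε(b)•p'(a)`), there is
a unique coalgebra morphism `θ' : S(V) → S(V')` whose composition with `p'`
equals `θ` minus its counit part `μ ↦ ε(μ) • θ(1)`. -/
theorem symAlg_cofree_lift {k V V' : Type*} [Field k] [CharZero k]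
    [AddCommGroup V] [Module k V] [AddCommGroup V'] [Module k V']
    (θ : SymmAlg k V →ₗ[k] V')
    (p' : SymmAlg k V' →ₗ[k] V')
    (hp1 : p' 1 = 0)
    (hpι : ∀ v : V', p' (SymmAlg.ι k V' v) = v)
    (hpmul : ∀ a b : SymmAlg k V',
      p' (a * b) = SymmAlg.counit k V' a • p' b + SymmAlg.counit k V' b • p' a) :
    ∃! f : SymmAlg k V →ₗ[k] SymmAlg k V',
      -- `f` is a coalgebra morphism:
      ((SymmAlg.comul k V').toLinearMap ∘ₗ f
          = TensorProduct.map f f ∘ₗ (SymmAlg.comul k V).toLinearMap) ∧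
      ((SymmAlg.counit k V').toLinearMap ∘ₗ f
          = (SymmAlg.counit k V).toLinearMap) ∧
      -- its degree-1 part is `θ` minus its counit part:
      (p' ∘ₗ f = θ - (SymmAlg.counit k V).toLinearMap.smulRight (θ 1)) := by
  have hε1 : SymmAlg.counit k V 1 = 1 := map_one _
  set b : SymmAlg k V →ₗ[k] V' := θ - (SymmAlg.counit k V).toLinearMap.smulRight (θ 1) with hb
  have hb1 : b 1 = 0 := by simp [hb]
  obtain ⟨e, he⟩ := SymmAlg.exists_exp (WithConv.toConv (SymmAlg.ι k V' ∘ₗ b)) (by simp [hb1])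
  have e1 : e 1 = 1 := SymmAlg.exp_one (by simp [hb1]) he
  have eo := SymmAlg.exp_ode he
  have hcou := SymmAlg.exp_counit e1 eo
  refine ⟨e.ofConv, ⟨SymmAlg.exp_comul e1 eo, hcou, ?_⟩, ?_⟩
  · ext x
    rw [LinearMap.comp_apply]
    induction x using SymmAlg.ind with
    | h1 => rw [e1, hp1, hb1]
    | hm v x _ =>
      rw [← SymmAlg.D_apply, eo, SymmAlg.proj_mul p' hpmul]
      · exact hpι _
      · intro y
        exact SymmAlg.counit_ι' _
      · intro y
        exact DFunLike.congr_fun hcou y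
    | ha x y hx hy => rw [map_add, map_add, hx, hy, map_add]
    | hs c x hx => rw [map_smul, map_smul, hx, map_smul]
  · rintro f ⟨hf1, hf2, hf3⟩
    obtain ⟨e0, he0⟩ := SymmAlg.exists_exp (WithConv.toConv (SymmAlg.ι k V' ∘ₗ p')) (by simp [hp1])
    have hid : e0 = WithConv.toConv LinearMap.id :=
      SymmAlg.ode_unique (SymmAlg.exp_one (by simp [hp1]) he0)
        (SymmAlg.exp_ode he0) (SymmAlg.id_ode p' hpι hpmul)
    ext x
    obtain ⟨N, h1, h2⟩ := ((he0 (f x)).and (he x)).exists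
    rw [SymmAlg.E_comp _ f hf1 hf2] at h1
    have h3 : (WithConv.toConv (SymmAlg.ι k V' ∘ₗ p')).ofConv ∘ₗ f = SymmAlg.ι k V' ∘ₗ b := by
      rw [← hf3]; rfl
    rw [h3, h2, hid] at h1
    exact h1.symm

end
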